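/- Let (W,T) be an affine dual Coxeter system of rank n+1 arising from a crystallographic root system Φ. An element w ∈ W is a quasi-Coxeter element for (W,T) if and only if there exist roots γ_1,…,γ_{n+1} ∈ Φ and integers l_1,…,l_{n+1} ∈ ℤ such that w = s_{γ_1,l_1} ⋯ s_{γ_{n+1},l_{n+1}} and W = ⟨s_{γ_1,l_1},…,s_{γ_{n+1},l_{n+1}}⟩ (the factorization is not assumed to be reduced). -/

import Mathlib

/-!
The affine functions on `V`, with `dim V = n`, form a space of dimension `n + 1` on which an affine
reflection acts as the linear reflection in its affine root. If `n + 1` reflections generate the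
affine Weyl group, then their affine roots form a basis of this space, since their span contains
every affine root of the group. By Carter's argument an affine function fixed by the product `w` of
these reflections is then fixed by each of them, so its gradient is orthogonal to `Φ` and vanishes.
A factorization of `w` into fewer than `n` reflections would fix some affine function with nonzero
gradient, and one into exactly `n` reflections has the wrong determinant.
-/

open scoped RealInnerProductSpace

noncomputable section

variable {V : Type*} [NormedAddCommGroup V] [InnerProductSpace ℝ V]

/-- The coroot `α^∨ = 2α/(α|α)` of a vector `α`. -/
def coroot (α : V) : V := (2 / ⟪α, α⟫) • α

/-- The affine reflection `s_{α,k} : v ↦ v - ((v|α) - k)α^∨`, as a function. -/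
def sAffFun (α : V) (k : ℝ) (v : V) : V := v - (⟪v, α⟫ - k) • coroot α

theorem sAffFun_involutive (α : V) (k : ℝ) : Function.Involutive (sAffFun α k) := by
  intro v
  by_cases h : α = 0
  · simp [sAffFun, coroot, h]
  · have h2 : ⟪α, α⟫ ≠ 0 := by
      intro hz
      exact h (inner_self_eq_zero.mp hz)
    have hr : ⟪coroot α, α⟫ = 2 := by
      simp only [coroot, real_inner_smul_left]
      field_simp
    simp only [sAffFun, inner_sub_left, real_inner_smul_left, hr]
    have : ⟪v, α⟫ - (⟪v, α⟫ - k) * 2 - k = -(⟪v, α⟫ - k) := by ring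
    rw [this, neg_smul, sub_neg_eq_add, sub_add_cancel]

/-- The affine reflection `s_{α,k}` as a permutation of `V`. -/
def sAff (α : V) (k : ℝ) : Equiv.Perm V :=
  Function.Involutive.toPerm _ (sAffFun_involutive α k)

/-- The translation `Tr(x) : v ↦ v + x`, as a function. -/
def trFun (x : V) (v : V) : V := v + x

/-- The translation `Tr(x) : v ↦ v + x`, as a permutation of `V`. -/
def trPerm (x : V) : Equiv.Perm V := Equiv.addRight x

/-- A crystallographic (reduced) root system in a Euclidean space `V`. -/
structure IsCrystRootSystem (Φ : Set V) : Prop where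
  finite : Φ.Finite
  nonempty : Φ.Nonempty
  ne_zero : ∀ α ∈ Φ, α ≠ 0
  spanning : Submodule.span ℝ Φ = ⊤
  refl_mem : ∀ α ∈ Φ, ∀ β ∈ Φ, sAffFun α 0 β ∈ Φ
  reduced : ∀ α ∈ Φ, ∀ c : ℝ, c • α ∈ Φ → c = 1 ∨ c = -1
  cryst : ∀ α ∈ Φ, ∀ β ∈ Φ, ∃ n : ℤ, 2 * ⟪β, α⟫ / ⟪α, α⟫ = (n : ℝ)

/-- The (finite) Weyl group of `Φ`, generated by the reflections `s_α`. -/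
def WeylGroup (Φ : Set V) : Subgroup (Equiv.Perm V) :=
  Subgroup.closure {g | ∃ α ∈ Φ, g = sAff α 0}

/-- The affine Weyl group of `Φ`, generated by all affine reflections `s_{α,k}`, `k ∈ ℤ`. -/
def AffWeylGroup (Φ : Set V) : Subgroup (Equiv.Perm V) :=
  Subgroup.closure {g | ∃ α ∈ Φ, ∃ k : ℤ, g = sAff α k}

/-- The set of reflections of the affine Weyl group. -/
def AffReflections (Φ : Set V) : Set (Equiv.Perm V) :=
  {g | ∃ α ∈ Φ, ∃ k : ℤ, g = sAff α k}

/-- The coweight lattice `P(Φ^∨) = {x | (x|α) ∈ ℤ for all α ∈ Φ}`. -/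
def coweightLattice (Φ : Set V) : Set V :=
  {x | ∀ α ∈ Φ, ∃ n : ℤ, ⟪x, α⟫ = (n : ℝ)}

/-- `Φ` is irreducible: it admits no decomposition into two nonempty orthogonal parts. -/
def IsIrreducibleRS (Φ : Set V) : Prop :=
  ∀ Φ₁ Φ₂ : Set V, Φ₁ ∪ Φ₂ = Φ → (∀ α ∈ Φ₁, ∀ β ∈ Φ₂, ⟪α, β⟫ = 0) →
    Φ₁ = ∅ ∨ Φ₂ = ∅

section Hurwitz

variable {G : Type*} [Group G]

/-- One Hurwitz move: replace two adjacent entries `(a, b)` by `(a * b * a⁻¹, a)`. -/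
def HurwitzMove (l l' : List G) : Prop :=
  ∃ (u v : List G) (a b : G),
    l = u ++ a :: b :: v ∧ l' = u ++ (a * b * a⁻¹) :: a :: v

/-- Hurwitz equivalence: two tuples are Hurwitz equivalent iff they lie in the same
orbit of the Hurwitz action of the braid group. -/
def HurwitzEquiv (l l' : List G) : Prop := Relation.EqvGen HurwitzMove l l'

/-- The reflection length `ℓ_T(w)` of `w` with respect to a generating set `T`. -/
noncomputable def reflLength (T : Set G) (w : G) : ℕ :=
  sInf {k | ∃ l : List G, (∀ t ∈ l, t ∈ T) ∧ l.prod = w ∧ l.length = k}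

/-- `l` is a reduced `T`-factorization of `w`, i.e. an element of `Red_T(w)`. -/
def IsRedFac (T : Set G) (w : G) (l : List G) : Prop :=
  (∀ t ∈ l, t ∈ T) ∧ l.prod = w ∧ l.length = reflLength T w

end Hurwitz


/-- `w` is a quasi-Coxeter element for the affine dual Coxeter system `(W,T)` of rank `n+1`
associated to `Φ`: some reduced reflection factorization of `w` of length `n+1` generates
the whole affine Weyl group. -/
def IsQuasiCoxeterAff (Φ : Set V) (n : ℕ) (w : Equiv.Perm V) : Prop :=
  ∃ t : Fin (n + 1) → Equiv.Perm V,
    (∀ i, t i ∈ AffReflections Φ) ∧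
    (List.ofFn t).prod = w ∧
    n + 1 = reflLength (AffReflections Φ) w ∧
    Subgroup.closure (Set.range t) = AffWeylGroup Φ


theorem reflLength_eq_of_forall_le {G : Type*} [Group G] {T : Set G} {w : G} {m : ℕ}
    {t : Fin m → G} (ht : ∀ i, t i ∈ T) (hprod : (List.ofFn t).prod = w)
    (hle : ∀ (k : ℕ) (u : Fin k → G), (∀ i, u i ∈ T) → (List.ofFn u).prod = w → m ≤ k) :
    reflLength T w = m := by
  have hmem : m ∈ {k | ∃ l : List G, (∀ s ∈ l, s ∈ T) ∧ l.prod = w ∧ l.length = k} :=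
    ⟨List.ofFn t, by simpa [List.mem_ofFn] using ht, hprod, List.length_ofFn⟩
  refine le_antisymm (Nat.sInf_le hmem) (le_csInf ⟨m, hmem⟩ ?_)
  rintro k ⟨l, hl, hlw, rfl⟩
  exact hle l.length l.get (fun i => hl _ (l.get_mem i)) (by rw [List.ofFn_get, hlw])

section PreReflections

variable {R M : Type*} [CommRing R] [AddCommGroup M] [Module R M] {m : ℕ}

theorem det_preReflection [Module.Free R M] [Module.Finite R M] (x : M) (f : Module.Dual R M) :
    LinearMap.det (Module.preReflection x f) = 1 - f x := by
  have h : Module.preReflection x f = LinearMap.transvection f (-x) := by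
    ext y
    simp [Module.preReflection_apply, LinearMap.transvection.apply, sub_eq_add_neg]
  rw [h, LinearMap.transvection.det, map_neg, sub_eq_add_neg]

theorem prod_preReflection_apply_sub_mem_span (x : Fin m → M) (f : Fin m → Module.Dual R M)
    (y : M) :
    (List.ofFn fun i => Module.preReflection (x i) (f i)).prod y - y ∈
      Submodule.span R (Set.range x) := by
  induction m with
  | zero => simp
  | succ m ih =>
    have htail := Submodule.span_mono (Set.range_comp_subset_range Fin.succ x)
      (ih (x ∘ Fin.succ) (f ∘ Fin.succ))
    have hhead := Submodule.subset_span (R := R) (Set.mem_range_self (f := x) 0)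
    rw [List.ofFn_succ, List.prod_cons, Module.End.mul_apply, Module.preReflection_apply,
      sub_right_comm]
    exact Submodule.sub_mem _ htail (Submodule.smul_mem _ _ hhead)

theorem prod_preReflection_apply_eq_self {x : Fin m → M} {f : Fin m → Module.Dual R M} {y : M}
    (hy : ∀ i, f i y = 0) :
    (List.ofFn fun i => Module.preReflection (x i) (f i)).prod y = y := by
  induction m with
  | zero => simp
  | succ m ih =>
    rw [List.ofFn_succ, List.prod_cons, Module.End.mul_apply, ih fun i => hy i.succ,
      Module.preReflection_apply, hy, zero_smul, sub_zero]

/- Carter's argument: if `z` is the image of `y` under all factors but the first, then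
`y = z - f₀(z) x₀`, while `z - y` lies in the span of the remaining `xᵢ`; hence `f₀(z) = 0`. -/
theorem prod_preReflection_apply_eq_self_iff {x : Fin m → M} {f : Fin m → Module.Dual R M}
    (hx : LinearIndependent R x) {y : M} :
    (List.ofFn fun i => Module.preReflection (x i) (f i)).prod y = y ↔ ∀ i, f i y = 0 := by
  refine ⟨fun hy => ?_, prod_preReflection_apply_eq_self⟩
  induction m with
  | zero => exact fun i => i.elim0
  | succ m ih =>
    rw [List.ofFn_succ, List.prod_cons, Module.End.mul_apply, Module.preReflection_apply] at hy
    set z := (List.ofFn fun i : Fin m =>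
      Module.preReflection (x i.succ) (f i.succ)).prod y with hz
    have hmem : f 0 z • x 0 ∈ Submodule.span R (x '' (Set.univ \ {0})) := by
      have htail : x '' (Set.univ \ {0}) = Set.range (x ∘ Fin.succ) := by
        rw [Set.range_comp, Fin.range_succ, Set.compl_eq_univ_sdiff]
      rw [← sub_eq_iff_eq_add'.mpr (sub_eq_iff_eq_add.mp hy), htail]
      exact prod_preReflection_apply_sub_mem_span (x ∘ Fin.succ) (f ∘ Fin.succ) y
    have hf : f 0 z = 0 := hx.eq_zero_of_smul_mem_span 0 _ hmem
    have hzy : z = y := by rwa [hf, zero_smul, sub_zero] at hy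
    exact Fin.cases (hzy ▸ hf) (ih (hx.comp _ (Fin.succ_injective m)) hzy)

end PreReflections

theorem sAff_apply (α : V) (k : ℝ) (v : V) : sAff α k v = v - (⟪v, α⟫ - k) • coroot α :=
  rfl

theorem sAff_inv (α : V) (k : ℝ) : (sAff α k)⁻¹ = sAff α k :=
  rfl

theorem inner_coroot_self {α : V} (hα : α ≠ 0) : ⟪coroot α, α⟫ = 2 := by
  rw [coroot, real_inner_smul_left, div_mul_cancel₀ _ (inner_self_ne_zero.mpr hα)]

theorem inner_coroot_left_eq_zero_iff {α u : V} : ⟪coroot α, u⟫ = 0 ↔ ⟪α, u⟫ = 0 := by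
  by_cases hα : α = 0 <;> simp [coroot, real_inner_smul_left, hα]

theorem mem_orthogonal_span_range_iff_inner_coroot {ι : Type*} {γ : ι → V} {u : V} :
    u ∈ (Submodule.span ℝ (Set.range γ))ᗮ ↔ ∀ i, ⟪coroot (γ i), u⟫ = 0 := by
  simp only [inner_coroot_left_eq_zero_iff]
  rw [← Submodule.span_singleton_le_iff_mem, ← Submodule.isOrtho_iff_le, Submodule.isOrtho_comm,
    Submodule.isOrtho_span]
  simp

/-- The affine function `x ↦ (x|a) - c` on `V` with coordinates `p = (a, c)`. The affine root
vanishing on the mirror of `s_{α,k}` thus has coordinates `(α, k)`. -/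
def affineFun (p : V × ℝ) (x : V) : ℝ :=
  ⟪x, p.1⟫ - p.2

/-- The reflection in the affine root `a = (α, k)` on the space of affine functions, in the
coordinates of `affineFun`: the linear map induced by `s_{α,k}`. -/
def affineRootReflection (a : V × ℝ) : Module.End ℝ (V × ℝ) :=
  Module.preReflection a ((innerₗ V (coroot a.1)).comp (LinearMap.fst ℝ V ℝ))

theorem affineRootReflection_apply (a p : V × ℝ) :
    affineRootReflection a p = p - ⟪coroot a.1, p.1⟫ • a :=
  rfl

theorem affineFun_injective : Function.Injective (affineFun (V := V)) := by
  intro p q h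
  have hconst : p.2 = q.2 := by simpa [affineFun] using congrFun h 0
  refine Prod.ext (ext_inner_left ℝ fun x => ?_) hconst
  simpa [affineFun, hconst] using congrFun h x

theorem affineFun_sAff (p a : V × ℝ) (x : V) :
    affineFun p (sAff a.1 a.2 x) = affineFun (affineRootReflection a p) x := by
  simp only [affineFun, sAff_apply, affineRootReflection_apply, inner_sub_left, inner_sub_right,
    real_inner_smul_left, real_inner_smul_right, Prod.fst_sub, Prod.snd_sub, Prod.smul_fst,
    Prod.smul_snd, smul_eq_mul]
  ring

theorem affineFun_affineRootReflection_sAff (p a : V × ℝ) (x : V) :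
    affineFun (affineRootReflection a p) (sAff a.1 a.2 x) = affineFun p x := by
  rw [← affineFun_sAff]
  exact congrArg (affineFun p) (sAffFun_involutive a.1 a.2 x)

theorem affineFun_prod_affineRootReflection_prod_sAff {m : ℕ} (a : Fin m → V × ℝ) (p : V × ℝ)
    (x : V) :
    affineFun ((List.ofFn fun i => affineRootReflection (a i)).prod p)
      ((List.ofFn fun i => sAff (a i).1 (a i).2).prod x) = affineFun p x := by
  induction m with
  | zero => simp
  | succ m ih =>
    simp only [List.ofFn_succ, List.prod_cons, Module.End.mul_apply, Equiv.Perm.mul_apply,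
      affineFun_affineRootReflection_sAff]
    exact ih fun i => a i.succ

section Factorizations

variable {m k : ℕ} {a : Fin m → V × ℝ} {b : Fin k → V × ℝ}

theorem prod_affineRootReflection_eq_of_prod_sAff_eq
    (h : (List.ofFn fun i => sAff (a i).1 (a i).2).prod =
      (List.ofFn fun j => sAff (b j).1 (b j).2).prod) :
    (List.ofFn fun i => affineRootReflection (a i)).prod =
      (List.ofFn fun j => affineRootReflection (b j)).prod := by
  refine LinearMap.ext fun p => affineFun_injective (funext fun y => ?_)
  obtain ⟨x, rfl⟩ := (List.ofFn fun i => sAff (a i).1 (a i).2).prod.surjective y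
  rw [affineFun_prod_affineRootReflection_prod_sAff, h,
    affineFun_prod_affineRootReflection_prod_sAff]

theorem det_prod_affineRootReflection [FiniteDimensional ℝ V] (ha : ∀ i, (a i).1 ≠ 0) :
    LinearMap.det (List.ofFn fun i => affineRootReflection (a i)).prod = (-1) ^ m := by
  have hdet (i : Fin m) : LinearMap.det (affineRootReflection (a i)) = -1 := by
    rw [affineRootReflection, det_preReflection]
    norm_num [inner_coroot_self (ha i)]
  simp [map_list_prod, List.map_ofFn, Function.comp_def, hdet]

theorem span_fst_le_of_prod_sAff_eq (ha : LinearIndependent ℝ a)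
    (h : (List.ofFn fun i => sAff (a i).1 (a i).2).prod =
      (List.ofFn fun j => sAff (b j).1 (b j).2).prod) :
    Submodule.span ℝ (Set.range fun i => (a i).1) ≤
      Submodule.span ℝ (Set.range fun j => (b j).1) := by
  have hFDa := FiniteDimensional.span_of_finite ℝ (Set.finite_range fun i => (a i).1)
  have hFDb := FiniteDimensional.span_of_finite ℝ (Set.finite_range fun j => (b j).1)
  rw [← Submodule.orthogonal_le_orthogonal_iff]
  intro u hu
  have hfixed : (List.ofFn fun i => affineRootReflection (a i)).prod (u, 0) = (u, 0) := by
    rw [prod_affineRootReflection_eq_of_prod_sAff_eq h]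
    exact prod_preReflection_apply_eq_self (mem_orthogonal_span_range_iff_inner_coroot.mp hu)
  exact mem_orthogonal_span_range_iff_inner_coroot.mpr
    ((prod_preReflection_apply_eq_self_iff ha).mp hfixed)

theorem finrank_lt_of_prod_sAff_eq [FiniteDimensional ℝ V]
    {a : Fin (Module.finrank ℝ V + 1) → V × ℝ} (ha : ∀ i, (a i).1 ≠ 0)
    (hspan : Submodule.span ℝ (Set.range a) = ⊤) (hb : ∀ j, (b j).1 ≠ 0)
    (h : (List.ofFn fun i => sAff (a i).1 (a i).2).prod =
      (List.ofFn fun j => sAff (b j).1 (b j).2).prod) :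
    Module.finrank ℝ V < k := by
  have hli : LinearIndependent ℝ a :=
    linearIndependent_of_top_le_span_of_card_eq_finrank hspan.ge (by simp)
  have hle : Module.finrank ℝ V ≤ k := by
    have hfst : Submodule.span ℝ (Set.range fun i => (a i).1) = ⊤ := by
      change Submodule.span ℝ (Set.range (LinearMap.fst ℝ V ℝ ∘ a)) = ⊤
      rw [Set.range_comp, Submodule.span_image, hspan, Submodule.map_top, Submodule.range_fst]
    have hbtop := top_le_iff.mp (hfst ▸ span_fst_le_of_prod_sAff_eq hli h)
    simpa only [Fintype.card_fin] using finrank_le_of_span_eq_top hbtop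
  have hparity : (-1 : ℝ) ^ (Module.finrank ℝ V + 1) = (-1) ^ k := by
    rw [← det_prod_affineRootReflection ha, ← det_prod_affineRootReflection hb,
      prod_affineRootReflection_eq_of_prod_sAff_eq h]
  refine hle.lt_of_ne fun hk => ?_
  rw [hk, pow_succ, mul_neg_one, neg_eq_self] at hparity
  exact pow_ne_zero k (neg_ne_zero.mpr one_ne_zero) hparity

end Factorizations

section Generation

variable {S : Set (V × ℝ)}

theorem exists_mem_span_affineFun_apply_eq {g : Equiv.Perm V}
    (hg : g ∈ Subgroup.closure ((fun a : V × ℝ => sAff a.1 a.2) '' S)) (p : V × ℝ) :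
    ∃ q ∈ Submodule.span ℝ S, ∀ x, affineFun p (g x) = affineFun (p - q) x := by
  have hmul (a : V × ℝ) (ha : a ∈ S) (g : Equiv.Perm V)
      (ih : ∀ p, ∃ q ∈ Submodule.span ℝ S, ∀ x, affineFun p (g x) = affineFun (p - q) x)
      (p : V × ℝ) :
      ∃ q ∈ Submodule.span ℝ S, ∀ x,
        affineFun p ((sAff a.1 a.2 * g) x) = affineFun (p - q) x := by
    obtain ⟨q, hq, hpq⟩ := ih (affineRootReflection a p)
    refine ⟨⟪coroot a.1, p.1⟫ • a + q, Submodule.add_mem _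
      (Submodule.smul_mem _ _ (Submodule.subset_span ha)) hq, fun x => ?_⟩
    rw [Equiv.Perm.mul_apply, affineFun_sAff, hpq, affineRootReflection_apply, sub_sub]
  induction hg using Subgroup.closure_induction_left generalizing p with
  | one => exact ⟨0, Submodule.zero_mem _, by simp⟩
  | mul_left s hs g _ ih =>
    obtain ⟨a, ha, rfl⟩ := hs
    exact hmul a ha g ih p
  | inv_mul_cancel s hs g _ ih =>
    obtain ⟨a, ha, rfl⟩ := hs
    rw [sAff_inv]
    exact hmul a ha g ih p

theorem mem_span_of_sAff_mem_closure {a : V × ℝ} (ha : a.1 ≠ 0)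
    (hmem : sAff a.1 a.2 ∈ Subgroup.closure ((fun a : V × ℝ => sAff a.1 a.2) '' S)) :
    a ∈ Submodule.span ℝ S := by
  obtain ⟨q, hq, haq⟩ := exists_mem_span_affineFun_apply_eq hmem a
  have h : (2 : ℝ) • a = q := by
    rw [← inner_coroot_self ha, ← sub_right_inj (a := a), ← affineRootReflection_apply]
    exact affineFun_injective (funext fun x => by rw [← affineFun_sAff, haq])
  exact (Submodule.smul_mem_iff _ two_ne_zero).mp (h ▸ hq)

theorem span_eq_top_of_affWeylGroup_le_closure {Φ : Set V} (hne : Φ.Nonempty)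
    (h0 : ∀ α ∈ Φ, α ≠ 0) (hspan : Submodule.span ℝ Φ = ⊤)
    (hgen : AffWeylGroup Φ ≤ Subgroup.closure ((fun a : V × ℝ => sAff a.1 a.2) '' S)) :
    Submodule.span ℝ S = ⊤ := by
  have hroot (α : V) (hα : α ∈ Φ) (k : ℤ) : (α, (k : ℝ)) ∈ Submodule.span ℝ S :=
    mem_span_of_sAff_mem_closure (h0 α hα) (hgen (Subgroup.subset_closure ⟨α, hα, k, rfl⟩))
  have hconst : ((0 : V), (1 : ℝ)) ∈ Submodule.span ℝ S := by
    obtain ⟨α, hα⟩ := hne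
    simpa using Submodule.sub_mem _ (hroot α hα 1) (hroot α hα 0)
  have hlin : Submodule.map (LinearMap.inl ℝ V ℝ) ⊤ ≤ Submodule.span ℝ S := by
    rw [← hspan, Submodule.map_span_le]
    exact fun α hα => by simpa using hroot α hα 0
  refine Submodule.eq_top_iff'.mpr fun p => ?_
  simpa using Submodule.add_mem _ (hlin (Submodule.mem_map_of_mem (Submodule.mem_top (x := p.1))))
    (Submodule.smul_mem _ p.2 hconst)

end Generation

theorem reflLength_eq_of_closure_eq_affWeylGroup [FiniteDimensional ℝ V] {Φ : Set V}
    (h0 : ∀ α ∈ Φ, α ≠ 0) (hspan : Submodule.span ℝ Φ = ⊤)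
    {γ : Fin (Module.finrank ℝ V + 1) → V} {l : Fin (Module.finrank ℝ V + 1) → ℤ}
    (hγ : ∀ i, γ i ∈ Φ)
    (hgen : Subgroup.closure (Set.range fun i => sAff (γ i) (l i : ℝ)) = AffWeylGroup Φ) :
    reflLength (AffReflections Φ) (List.ofFn fun i => sAff (γ i) (l i : ℝ)).prod =
      Module.finrank ℝ V + 1 := by
  refine reflLength_eq_of_forall_le (fun i => ⟨γ i, hγ i, l i, rfl⟩) rfl fun k u hu hprod => ?_
  choose β hβ j hu using hu
  obtain rfl : u = fun i => sAff (β i) (j i : ℝ) := funext hu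
  refine finrank_lt_of_prod_sAff_eq (a := fun i => (γ i, (l i : ℝ)))
    (b := fun i => (β i, (j i : ℝ))) (fun i => h0 _ (hγ i)) ?_ (fun i => h0 _ (hβ i))
    hprod.symm
  refine span_eq_top_of_affWeylGroup_le_closure ⟨γ 0, hγ 0⟩ h0 hspan ?_
  rw [← hgen, ← Set.range_comp]
  rfl

theorem statement_10_general [FiniteDimensional ℝ V] {Φ : Set V} (h0 : ∀ α ∈ Φ, α ≠ 0)
    (hspan : Submodule.span ℝ Φ = ⊤) (w : Equiv.Perm V) :
    IsQuasiCoxeterAff Φ (Module.finrank ℝ V) w ↔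
      ∃ (γ : Fin (Module.finrank ℝ V + 1) → V) (l : Fin (Module.finrank ℝ V + 1) → ℤ),
        (∀ i, γ i ∈ Φ) ∧
        (List.ofFn fun i => sAff (γ i) (l i : ℝ)).prod = w ∧
        Subgroup.closure (Set.range fun i => sAff (γ i) (l i : ℝ)) = AffWeylGroup Φ := by
  constructor
  · rintro ⟨t, ht, hprod, -, hgen⟩
    choose γ hγ l ht using ht
    obtain rfl : t = fun i => sAff (γ i) (l i : ℝ) := funext ht
    exact ⟨γ, l, hγ, hprod, hgen⟩
  · rintro ⟨γ, l, hγ, rfl, hgen⟩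
    exact ⟨fun i => sAff (γ i) (l i : ℝ), fun i => ⟨γ i, hγ i, l i, rfl⟩, rfl,
      (reflLength_eq_of_closure_eq_affWeylGroup h0 hspan hγ hgen).symm, hgen⟩

theorem IsCrystRootSystem.finiteDimensional {Φ : Set V} (hΦ : IsCrystRootSystem Φ) :
    FiniteDimensional ℝ V :=
  Module.finite_def.mpr (hΦ.spanning ▸ Submodule.fg_span hΦ.finite)

theorem statement_10 (Φ : Set V) (hΦ : IsCrystRootSystem Φ)
    (n : ℕ) (hrank : Module.finrank ℝ V = n)
    (w : Equiv.Perm V) (hw : w ∈ AffWeylGroup Φ) :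
    IsQuasiCoxeterAff Φ n w ↔
      ∃ (γ : Fin (n + 1) → V) (l : Fin (n + 1) → ℤ),
        (∀ i, γ i ∈ Φ) ∧
        (List.ofFn fun i => sAff (γ i) (l i : ℝ)).prod = w ∧
        Subgroup.closure (Set.range fun i => sAff (γ i) (l i : ℝ)) = AffWeylGroup Φ := by
  have := hΦ.finiteDimensional
  exact hrank ▸ statement_10_general hΦ.ne_zero hΦ.spanning w


end
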